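/- For every integer α, the map g_α defined by g_α(X) := X + (α−1)·min X − (α+1)·max X is an involutive automorphism of the monoid P_fin(ℤ): it is bijective, satisfies g_α(X + Y) = g_α(X) + g_α(Y), and g_α ∘ g_α is the identity map. -/

import Mathlib

open Finset Pointwise

/-- Nonempty finite subsets of ℤ. -/
abbrev NFin : Type := {X : Finset ℤ // X.Nonempty}

/-- Sumset operation on nonempty finite subsets of ℤ. -/
instance : Add NFin := ⟨fun X Y => ⟨X.1 + Y.1, X.2.add Y.2⟩⟩

/-- Minimum of a nonempty finite subset of ℤ. -/
def minz (X : NFin) : ℤ := X.1.min' X.2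

/-- Maximum of a nonempty finite subset of ℤ. -/
def maxz (X : NFin) : ℤ := X.1.max' X.2

/-- Translate `X + c`. -/
def tr (X : NFin) (c : ℤ) : NFin := ⟨X.1.image (· + c), X.2.image _⟩

/-- `f_α(X) = X + α·min X − α·max X`. -/
def fa (α : ℤ) (X : NFin) : NFin := tr X (α * minz X - α * maxz X)

/-- `g_α(X) = X + (α−1)·min X − (α+1)·max X`. -/
def ga (α : ℤ) (X : NFin) : NFin := tr X ((α - 1) * minz X - (α + 1) * maxz X)

/-- Pointwise negation `X ↦ −X`. -/
def negF (X : NFin) : NFin := ⟨-X.1, X.2.neg⟩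

theorem IsLeast.add_set {s t : Set ℤ} {a b : ℤ} (hs : IsLeast s a) (ht : IsLeast t b) :
    IsLeast (s + t) (a + b) := by
  refine ⟨Set.add_mem_add hs.1 ht.1, ?_⟩
  rintro _ ⟨x, hx, y, hy, rfl⟩
  exact add_le_add (hs.2 hx) (ht.2 hy)

theorem IsGreatest.add_set {s t : Set ℤ} {a b : ℤ} (hs : IsGreatest s a) (ht : IsGreatest t b) :
    IsGreatest (s + t) (a + b) := by
  refine ⟨Set.add_mem_add hs.1 ht.1, ?_⟩
  rintro _ ⟨x, hx, y, hy, rfl⟩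
  exact add_le_add (hs.2 hx) (ht.2 hy)

theorem isLeast_minz (X : NFin) : IsLeast (X.1 : Set ℤ) (minz X) := X.1.isLeast_min' X.2

theorem isGreatest_maxz (X : NFin) : IsGreatest (X.1 : Set ℤ) (maxz X) := X.1.isGreatest_max' X.2

theorem val_add (X Y : NFin) : (X + Y).1 = X.1 + Y.1 := rfl

theorem val_tr (X : NFin) (c : ℤ) : (tr X c).1 = X.1 + {c} := (Finset.add_singleton c).symm

theorem minz_add (X Y : NFin) : minz (X + Y) = minz X + minz Y := by
  refine (isLeast_minz (X + Y)).unique ?_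
  rw [val_add, Finset.coe_add]
  exact (isLeast_minz X).add_set (isLeast_minz Y)

theorem maxz_add (X Y : NFin) : maxz (X + Y) = maxz X + maxz Y := by
  refine (isGreatest_maxz (X + Y)).unique ?_
  rw [val_add, Finset.coe_add]
  exact (isGreatest_maxz X).add_set (isGreatest_maxz Y)

theorem minz_tr (X : NFin) (c : ℤ) : minz (tr X c) = minz X + c := by
  refine (isLeast_minz (tr X c)).unique ?_
  rw [val_tr, Finset.coe_add, Finset.coe_singleton]
  exact (isLeast_minz X).add_set isLeast_singleton

theorem maxz_tr (X : NFin) (c : ℤ) : maxz (tr X c) = maxz X + c := by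
  refine (isGreatest_maxz (tr X c)).unique ?_
  rw [val_tr, Finset.coe_add, Finset.coe_singleton]
  exact (isGreatest_maxz X).add_set isGreatest_singleton

theorem tr_tr (X : NFin) (c d : ℤ) : tr (tr X c) d = tr X (c + d) := by
  apply Subtype.ext
  simp only [val_tr, add_assoc, Finset.singleton_add_singleton]

theorem tr_zero (X : NFin) : tr X 0 = X := by
  apply Subtype.ext
  rw [val_tr, Finset.singleton_zero, add_zero]

theorem tr_add_tr (X Y : NFin) (c d : ℤ) : tr X c + tr Y d = tr (X + Y) (c + d) := by
  apply Subtype.ext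
  simp only [val_add, val_tr]
  rw [add_add_add_comm, Finset.singleton_add_singleton]

theorem ga_add (α : ℤ) (X Y : NFin) : ga α (X + Y) = ga α X + ga α Y := by
  simp only [ga, tr_add_tr, minz_add, maxz_add]
  congr 1
  ring

theorem ga_involutive (α : ℤ) : Function.Involutive (ga α) := by
  intro X
  simp only [ga, tr_tr, minz_tr, maxz_tr]
  convert tr_zero X using 2
  ring

/-- Each `g_α` is an involutive automorphism of `P_fin(ℤ)`. -/
theorem stmt_13 (α : ℤ) :
    (∀ X Y : NFin, ga α (X + Y) = ga α X + ga α Y) ∧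
    Function.Bijective (ga α) ∧ ga α ∘ ga α = id := by
  exact ⟨ga_add α, (ga_involutive α).bijective, (ga_involutive α).comp_self⟩
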